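/- Let G be a finite group, let ℓ < m be positive integers, and let c ∈ (0,1). Suppose: (i) for every k and all nonempty subsets A₁, ..., A_k ⊆ G there exist σ₁, ..., σ_k ∈ G with |A₁^{σ₁} ⋯ A_k^{σ_k}| ≥ min(|A₁|^c ⋯ |A_k|^c, ℓ); and (ii) for every k and all subsets A₁, ..., A_k ⊆ G each of size at least ℓ, there exist σ₁, ..., σ_k ∈ G with |A₁^{σ₁} ⋯ A_k^{σ_k}| ≥ min(|A₁|^c ⋯ |A_k|^c, m). Then for every k and all nonempty subsets A₁, ..., A_k ⊆ G there exist σ₁, ..., σ_k ∈ G with |A₁^{σ₁} ⋯ A_k^{σ_k}| ≥ min(|A₁|^{c²/4} ⋯ |A_k|^{c²/4}, m). -/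

import Mathlib

/-!
Cut the sequence `A₁, …, A_k` into consecutive blocks, working from the right. A new block is closed
as soon as the product `p` of the cardinalities in it satisfies `p ^ c ≥ ℓ`. Some conjugates of the
sets of a closed block then have a product set of size `b ≥ ℓ`: either the leftmost set `A` of the
block already has at least `ℓ` elements, or hypothesis (i) applies. In both cases `b ≥ |A|`, and the
rest of the block, which was not yet closed, has cardinality product `t` with `t ^ c < ℓ ≤ b`; hence
`p ^ (c / 2) = (|A| t) ^ (c / 2) ≤ b` (`exists_block`).

What remains on the left is an unfinished block `T` whose cardinality product `t` satisfies
`t ^ c < ℓ`. If there is no closed block, (i) applied to `T` finishes the proof. Otherwise `T` is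
merged into the first closed block, which costs another factor `2` in the exponent (`merge_bound`).
Now every block yields a set of size at least `ℓ` and at least `p ^ (c / 4)`, and applying (ii) to
these sets gives the exponent `c ^ 2 / 4`. Conjugating the product set of a block amounts to
conjugating all of its factors, so the result is again a product of conjugates of the `A_j`
(`Realizes.flatten`).
-/

open scoped Pointwise

/-- The conjugate `A^σ = {σ⁻¹ a σ : a ∈ A}` of a finite subset of a group. -/
def conjFinset {G : Type*} [Group G] [DecidableEq G] (A : Finset G) (σ : G) : Finset G :=
  A.image fun a => σ⁻¹ * a * σ

/-- `Realizes L S`: the set `S` is a product `A₁^{σ₁} ⋯ A_k^{σ_k}` of conjugates of the members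
`A₁, …, A_k` of the list `L`, in this order. -/
inductive Realizes {G : Type} [Group G] [DecidableEq G] : List (Finset G) → Finset G → Prop
  | nil : Realizes [] 1
  | cons (A : Finset G) (σ : G) {L : List (Finset G)} {S : Finset G} :
      Realizes L S → Realizes (A :: L) (conjFinset A σ * S)

/-- The product of the cardinalities of the members of a list of finite sets. -/
def cardProd {G : Type} (L : List (Finset G)) : ℝ := (L.map fun A => (A.card : ℝ)).prod

lemma cardProd_cons {G : Type} (A : Finset G) (L : List (Finset G)) :
    cardProd (A :: L) = A.card * cardProd L := by simp [cardProd]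

lemma cardProd_append {G : Type} (L L' : List (Finset G)) :
    cardProd (L ++ L') = cardProd L * cardProd L' := by simp [cardProd]

lemma one_le_cardProd {G : Type} {L : List (Finset G)} (hL : ∀ A ∈ L, A.Nonempty) : 1 ≤ cardProd L := by
  induction L with
  | nil => simp [cardProd]
  | cons A L ih =>
    rw [cardProd_cons]
    have h1 : (1 : ℝ) ≤ A.card := by exact_mod_cast (hL A (by simp)).card_pos
    have h2 := ih fun B hB => hL B (by simp [hB])
    nlinarith

lemma prod_rpow_card {G : Type} {k : ℕ} (A : Fin k → Finset G) (c : ℝ) :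
    ∏ j, ((A j).card : ℝ) ^ c = cardProd (List.ofFn A) ^ c := by
  rw [Real.finsetProd_rpow _ _ fun _ _ => Nat.cast_nonneg _]
  simp [cardProd, List.map_ofFn, List.prod_ofFn]

section
variable {G : Type} [Group G] [DecidableEq G]

lemma conjFinset_eq_image (A : Finset G) (σ : G) :
    conjFinset A σ = A.image (MulAut.conj σ⁻¹) := by
  rw [conjFinset]
  congr 1
  funext a
  simp only [MulAut.conj_apply, inv_inv]

lemma conjFinset_mul (A B : Finset G) (σ : G) :
    conjFinset (A * B) σ = conjFinset A σ * conjFinset B σ := by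
  simp only [conjFinset_eq_image, Finset.image_mul]

lemma conjFinset_one (σ : G) : conjFinset (1 : Finset G) σ = 1 := by
  simp [conjFinset, Finset.singleton_one]

lemma conjFinset_conjFinset (A : Finset G) (σ τ : G) :
    conjFinset (conjFinset A σ) τ = conjFinset A (σ * τ) := by
  simp only [conjFinset, Finset.image_image]
  congr 1
  funext a
  simp [mul_assoc]

lemma card_conjFinset (A : Finset G) (σ : G) : (conjFinset A σ).card = A.card := by
  rw [conjFinset_eq_image]
  exact Finset.card_image_of_injective _ (MulAut.conj σ⁻¹).injective

lemma conjFinset_nonempty {A : Finset G} (hA : A.Nonempty) (σ : G) :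
    (conjFinset A σ).Nonempty := hA.image _

namespace Realizes

lemma append {L L' : List (Finset G)} {S S' : Finset G} (h : Realizes L S)
    (h' : Realizes L' S') : Realizes (L ++ L') (S * S') := by
  induction h with
  | nil => simpa using h'
  | cons A σ _ ih => rw [mul_assoc]; exact .cons A σ ih

lemma conj {L : List (Finset G)} {S : Finset G} (h : Realizes L S) (τ : G) :
    Realizes L (conjFinset S τ) := by
  induction h with
  | nil => rw [conjFinset_one]; exact .nil
  | cons A σ _ ih => rw [conjFinset_mul, conjFinset_conjFinset]; exact .cons A _ ih

lemma nonempty {L : List (Finset G)} {S : Finset G} (h : Realizes L S)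
    (hL : ∀ A ∈ L, A.Nonempty) : S.Nonempty := by
  induction h with
  | nil => exact Finset.one_nonempty
  | cons A σ _ ih =>
    exact (conjFinset_nonempty (hL A (by simp)) σ).mul (ih fun B hB => hL B (by simp [hB]))

lemma exists_realizes (L : List (Finset G)) : ∃ S, Realizes L S := by
  induction L with
  | nil => exact ⟨1, .nil⟩
  | cons A L ih => obtain ⟨S, hS⟩ := ih; exact ⟨_, .cons A 1 hS⟩

lemma ofFn {k : ℕ} (A : Fin k → Finset G) (σ : Fin k → G) :
    Realizes (List.ofFn A) (List.ofFn fun j => conjFinset (A j) (σ j)).prod := by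
  induction k with
  | zero => simpa using Realizes.nil
  | succ k ih =>
    rw [List.ofFn_succ, List.ofFn_succ, List.prod_cons]
    exact .cons _ _ (ih (fun j => A j.succ) fun j => σ j.succ)

lemma exists_ofFn {k : ℕ} (A : Fin k → Finset G) {S : Finset G}
    (h : Realizes (List.ofFn A) S) :
    ∃ σ : Fin k → G, (List.ofFn fun j => conjFinset (A j) (σ j)).prod = S := by
  induction k generalizing S with
  | zero =>
    rw [List.ofFn_zero] at h
    cases h
    exact ⟨fun _ => 1, by simp⟩
  | succ k ih =>
    rw [List.ofFn_succ] at h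
    cases h with
    | cons _ τ h =>
      obtain ⟨σ, hσ⟩ := ih _ h
      exact ⟨Fin.cons τ σ, by simp [List.ofFn_succ, ← hσ]⟩

/-- A product of conjugates of product sets of blocks is a product of conjugates of the members of
the blocks. -/
lemma flatten {Ls : List (List (Finset G))} {Bs : List (Finset G)}
    (h : List.Forall₂ Realizes Ls Bs) {S : Finset G} (hS : Realizes Bs S) :
    Realizes Ls.flatten S := by
  induction h generalizing S with
  | nil => simpa using hS
  | cons hb _ ih =>
    cases hS with
    | cons _ σ hS => exact (hb.conj σ).append (ih hS)

end Realizes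

/-- A growth hypothesis indexed by `Fin k`, restated for lists. -/
lemma growth_list {P : Finset G → Prop} {c x : ℝ}
    (h : ∀ (k : ℕ) (A : Fin k → Finset G), (∀ j, P (A j)) →
      ∃ σ : Fin k → G,
        (((List.ofFn fun j => conjFinset (A j) (σ j)).prod).card : ℝ) ≥
          min (∏ j, ((A j).card : ℝ) ^ c) x)
    (L : List (Finset G)) (hL : ∀ A ∈ L, P A) :
    ∃ S, Realizes L S ∧ min (cardProd L ^ c) x ≤ S.card := by
  obtain ⟨σ, hσ⟩ := h L.length L.get fun j => hL _ (L.get_mem j)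
  have hr := Realizes.ofFn L.get σ
  rw [prod_rpow_card] at hσ
  rw [List.ofFn_get] at hσ hr
  exact ⟨_, hr, hσ⟩

end

/-- The size bound for a newly closed block: `a` is the size of its leftmost set and `t` the
cardinality product of the others. -/
lemma block_bound {a t b c : ℝ} (hc : c ∈ Set.Ioo (0 : ℝ) 1) (ha : 1 ≤ a) (ht : 1 ≤ t)
    (hab : a ≤ b) (htb : t ^ c ≤ b) : (a * t) ^ (c / 2) ≤ b := by
  obtain ⟨hc0, hc1⟩ := hc
  have h1 : a ^ c ≤ b := (Real.rpow_le_self_of_one_le ha hc1.le).trans hab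
  have e : ((a * t) ^ (c / 2)) ^ 2 = a ^ c * t ^ c := by
    rw [← Real.rpow_natCast, ← Real.rpow_mul (by positivity),
      Real.mul_rpow (by positivity) (by positivity)]
    norm_num
  refine le_of_sq_le_sq ?_ (by linarith)
  rw [e, sq]
  exact mul_le_mul h1 htb (by positivity) (by linarith)

/-- The size bound after merging an unfinished block with cardinality product `t` into a closed
block with cardinality product `p`. -/
lemma merge_bound {p t b c : ℝ} (hc : c ∈ Set.Ioo (0 : ℝ) 1) (hp : 1 ≤ p) (ht : 1 ≤ t)
    (hpb : p ^ (c / 2) ≤ b) (htb : t ^ c ≤ b) : (t * p) ^ (c / 4) ≤ b := by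
  obtain ⟨hc0, hc1⟩ := hc
  have h1 : t ^ (c / 2) ≤ b :=
    (Real.rpow_le_rpow_of_exponent_le ht (by linarith)).trans htb
  have h0 : 1 ≤ p ^ (c / 2) := Real.one_le_rpow hp (by linarith)
  have e : ((t * p) ^ (c / 4)) ^ 2 = t ^ (c / 2) * p ^ (c / 2) := by
    rw [← Real.rpow_natCast, ← Real.rpow_mul (by positivity),
      Real.mul_rpow (by positivity) (by positivity)]
    congr 2 <;> push_cast <;> ring
  refine le_of_sq_le_sq ?_ (by linarith)
  rw [e, sq]
  exact mul_le_mul h1 hpb (by positivity) (by linarith)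

section
variable {G : Type} [Group G] [DecidableEq G]

/-- The condition `p ^ c ≥ ℓ` closes a block `A :: T` with cardinality product `p`, and makes its
product set large. -/
lemma exists_block {ℓ : ℕ} {c : ℝ} (hc : c ∈ Set.Ioo (0 : ℝ) 1)
    (h1 : ∀ L : List (Finset G), (∀ A ∈ L, A.Nonempty) →
      ∃ S, Realizes L S ∧ min (cardProd L ^ c) (ℓ : ℝ) ≤ S.card)
    {A : Finset G} {T : List (Finset G)} (hA : A.Nonempty) (hT : ∀ B ∈ T, B.Nonempty)
    (hTℓ : cardProd T ^ c < ℓ) (hAT : (ℓ : ℝ) ≤ cardProd (A :: T) ^ c) :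
    ∃ S, Realizes (A :: T) S ∧ ℓ ≤ S.card ∧ cardProd (A :: T) ^ (c / 2) ≤ S.card := by
  obtain ⟨S, hS, hℓS, hAS⟩ :
      ∃ S, Realizes (A :: T) S ∧ ℓ ≤ S.card ∧ A.card ≤ S.card := by
    rcases le_total ℓ A.card with h | h
    · obtain ⟨S, hS⟩ := Realizes.exists_realizes T
      have hle : A.card ≤ (conjFinset A 1 * S).card := by
        rw [← card_conjFinset A 1]
        exact Finset.card_le_card_mul_right (hS.nonempty hT)
      exact ⟨_, .cons A 1 hS, h.trans hle, hle⟩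
    · obtain ⟨S, hS, hle⟩ := h1 (A :: T) (by simpa using ⟨hA, hT⟩)
      rw [min_eq_right hAT] at hle
      have hle' : ℓ ≤ S.card := by exact_mod_cast hle
      exact ⟨S, hS, hle', h.trans hle'⟩
  refine ⟨S, hS, hℓS, ?_⟩
  rw [cardProd_cons]
  exact block_bound hc (by exact_mod_cast hA.card_pos) (one_le_cardProd hT)
    (by exact_mod_cast hAS) (hTℓ.le.trans (by exact_mod_cast hℓS))

/-- Decomposition of a list into an unfinished block `T` followed by closed blocks. -/
lemma exists_decomposition {ℓ : ℕ} (hℓ : 1 < ℓ) {c : ℝ} (hc : c ∈ Set.Ioo (0 : ℝ) 1)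
    (h1 : ∀ L : List (Finset G), (∀ A ∈ L, A.Nonempty) →
      ∃ S, Realizes L S ∧ min (cardProd L ^ c) (ℓ : ℝ) ≤ S.card)
    (L : List (Finset G)) (hL : ∀ A ∈ L, A.Nonempty) :
    ∃ (T : List (Finset G)) (Ls : List (List (Finset G))), L = T ++ Ls.flatten ∧
      cardProd T ^ c < ℓ ∧
      ∀ b ∈ Ls, ∃ S, Realizes b S ∧ ℓ ≤ S.card ∧ cardProd b ^ (c / 2) ≤ S.card := by
  induction L with
  | nil => exact ⟨[], [], by simp, by simpa [cardProd] using hℓ, by simp⟩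
  | cons A L ih =>
    obtain ⟨T, Ls, rfl, hT, hLs⟩ := ih fun B hB => hL B (by simp [hB])
    by_cases h : cardProd (A :: T) ^ c < ℓ
    · exact ⟨A :: T, Ls, by simp, h, hLs⟩
    · have hb := exists_block hc h1 (hL A (by simp)) (fun B hB => hL B (by simp [hB])) hT
        (not_lt.mp h)
      exact ⟨[], (A :: T) :: Ls, by simp, by simpa [cardProd] using hℓ, by simpa using ⟨hb, hLs⟩⟩

/-- Choice of one large product set for each block. -/
lemma exists_blockSets {ℓ : ℕ} {d : ℝ} (Ls : List (List (Finset G)))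
    (hLs : ∀ b ∈ Ls, ∃ S, Realizes b S ∧ ℓ ≤ S.card ∧ cardProd b ^ d ≤ S.card)
    (hne : ∀ b ∈ Ls, ∀ A ∈ b, A.Nonempty) :
    ∃ Bs, List.Forall₂ Realizes Ls Bs ∧ (∀ B ∈ Bs, ℓ ≤ B.card) ∧
      cardProd Ls.flatten ^ d ≤ cardProd Bs := by
  induction Ls with
  | nil => exact ⟨[], .nil, by simp, by simp [cardProd]⟩
  | cons b Ls ih =>
    obtain ⟨Bs, h1, h2, h3⟩ := ih (fun b' hb' => hLs b' (by simp [hb']))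
      fun b' hb' => hne b' (by simp [hb'])
    obtain ⟨S, hS, hℓS, hbS⟩ := hLs b (by simp)
    refine ⟨S :: Bs, .cons hS h1, by simpa using ⟨hℓS, h2⟩, ?_⟩
    have hb1 : 1 ≤ cardProd b := one_le_cardProd (hne b (by simp))
    have hf1 : 1 ≤ cardProd Ls.flatten := one_le_cardProd fun A hA => by
      obtain ⟨b', hb', hA⟩ := List.mem_flatten.mp hA
      exact hne b' (by simp [hb']) A hA
    rw [List.flatten_cons, cardProd_append, cardProd_cons,
      Real.mul_rpow (by linarith) (by linarith)]
    exact mul_le_mul hbS h3 (by positivity) (by positivity)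

/-- The list form of the theorem, for `ℓ > 1`. -/
lemma concatenation_list {ℓ m : ℕ} (hℓ : 1 < ℓ) {c : ℝ} (hc : c ∈ Set.Ioo (0 : ℝ) 1)
    (h1 : ∀ L : List (Finset G), (∀ A ∈ L, A.Nonempty) →
      ∃ S, Realizes L S ∧ min (cardProd L ^ c) (ℓ : ℝ) ≤ S.card)
    (h2 : ∀ L : List (Finset G), (∀ A ∈ L, ℓ ≤ A.card) →
      ∃ S, Realizes L S ∧ min (cardProd L ^ c) (m : ℝ) ≤ S.card)
    (L : List (Finset G)) (hL : ∀ A ∈ L, A.Nonempty) :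
    ∃ S, Realizes L S ∧ min (cardProd L ^ (c ^ 2 / 4)) (m : ℝ) ≤ S.card := by
  obtain ⟨T, Ls, rfl, hT, hLs⟩ := exists_decomposition hℓ hc h1 L hL
  obtain ⟨hc0, hc1⟩ := id hc
  have hTne : ∀ A ∈ T, A.Nonempty := fun A hA => hL A (by simp [hA])
  have hT1 := one_le_cardProd hTne
  cases Ls with
  | nil =>
    obtain ⟨S, hS, hle⟩ := h1 T hTne
    rw [min_eq_left hT.le] at hle
    refine ⟨S, by simpa using hS, (min_le_left _ _).trans (le_trans ?_ hle)⟩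
    rw [List.flatten_nil, List.append_nil]
    exact Real.rpow_le_rpow_of_exponent_le hT1 (by nlinarith)
  | cons b Ls =>
    have hne : ∀ b' ∈ (T ++ b) :: Ls, ∀ A ∈ b', A.Nonempty := by
      intro b' hb' A hA
      apply hL
      rcases List.mem_cons.mp hb' with rfl | hb'
      · simp only [List.mem_append, List.flatten_cons] at hA ⊢
        tauto
      · simp only [List.mem_append, List.flatten_cons, List.mem_flatten]
        exact .inr (.inr ⟨b', hb', hA⟩)
    have hblocks : ∀ b' ∈ (T ++ b) :: Ls, ∃ S, Realizes b' S ∧ ℓ ≤ S.card ∧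
        cardProd b' ^ (c / 4) ≤ S.card := by
      intro b' hb'
      rcases List.mem_cons.mp hb' with rfl | hb'
      · obtain ⟨S, hS, hℓS, hle⟩ := hLs b (by simp)
        obtain ⟨S', hS'⟩ := Realizes.exists_realizes T
        have hmul : S.card ≤ (S' * S).card :=
          Finset.card_le_card_mul_left (hS'.nonempty hTne)
        refine ⟨S' * S, hS'.append hS, hℓS.trans hmul, ?_⟩
        rw [cardProd_append]
        refine le_trans (b := (S.card : ℝ)) ?_ (by exact_mod_cast hmul)
        exact merge_bound hc (one_le_cardProd fun A hA => hL A (by simp [hA])) hT1 hle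
          (hT.le.trans (by exact_mod_cast hℓS))
      · obtain ⟨S, hS, hℓS, hle⟩ := hLs b' (by simp [hb'])
        exact ⟨S, hS, hℓS, (Real.rpow_le_rpow_of_exponent_le
          (one_le_cardProd (hne b' (by simp [hb']))) (by linarith)).trans hle⟩
    obtain ⟨Bs, hR, hBℓ, hBs⟩ := exists_blockSets _ hblocks hne
    obtain ⟨S, hS, hle⟩ := h2 Bs hBℓ
    have hflat : T ++ (b :: Ls).flatten = ((T ++ b) :: Ls).flatten := by simp
    rw [hflat] at hL ⊢
    refine ⟨S, Realizes.flatten hR hS, le_trans (min_le_min_right _ ?_) hle⟩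
    have hf := one_le_cardProd hL
    rw [show c ^ 2 / 4 = c / 4 * c by ring, Real.rpow_mul (by linarith)]
    exact Real.rpow_le_rpow (by positivity) hBs hc0.le

end

theorem concatenation (G : Type) [Group G] [Fintype G] [DecidableEq G]
    (ℓ m : ℕ) (hℓpos : 0 < ℓ) (hℓm : ℓ < m) (c : ℝ) (hc : c ∈ Set.Ioo (0 : ℝ) 1)
    (h1 : ∀ (k : ℕ) (A : Fin k → Finset G), (∀ j, (A j).Nonempty) →
      ∃ σ : Fin k → G,
        (((List.ofFn fun j => conjFinset (A j) (σ j)).prod).card : ℝ) ≥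
          min (∏ j, ((A j).card : ℝ) ^ c) (ℓ : ℝ))
    (h2 : ∀ (k : ℕ) (A : Fin k → Finset G), (∀ j, ℓ ≤ (A j).card) →
      ∃ σ : Fin k → G,
        (((List.ofFn fun j => conjFinset (A j) (σ j)).prod).card : ℝ) ≥
          min (∏ j, ((A j).card : ℝ) ^ c) (m : ℝ))
    (k : ℕ) (A : Fin k → Finset G) (hA : ∀ j, (A j).Nonempty) :
    ∃ σ : Fin k → G,
      (((List.ofFn fun j => conjFinset (A j) (σ j)).prod).card : ℝ) ≥
        min (∏ j, ((A j).card : ℝ) ^ (c ^ 2 / 4)) (m : ℝ) := by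
  have hne : ∀ B ∈ List.ofFn A, B.Nonempty := by
    intro B hB
    obtain ⟨j, rfl⟩ := (List.mem_ofFn' _ _).mp hB
    exact hA j
  have h2' := growth_list (P := fun B => ℓ ≤ B.card) h2
  obtain ⟨S, hS, hle⟩ :
      ∃ S, Realizes (List.ofFn A) S ∧
        min (cardProd (List.ofFn A) ^ (c ^ 2 / 4)) (m : ℝ) ≤ S.card := by
    rcases (Nat.succ_le_of_lt hℓpos).eq_or_lt with h | h
    -- For `ℓ = 1` every nonempty set is admissible in `h2`.
    · obtain ⟨S, hS, hle⟩ := h2' (List.ofFn A) fun B hB => by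
        have := (hne B hB).card_pos
        omega
      refine ⟨S, hS, le_trans (min_le_min_right _ ?_) hle⟩
      exact Real.rpow_le_rpow_of_exponent_le (one_le_cardProd hne) (by nlinarith [hc.1, hc.2])
    · exact concatenation_list h hc (growth_list (P := fun B => B.Nonempty) h1) h2' _ hne
  obtain ⟨σ, rfl⟩ := Realizes.exists_ofFn A hS
  exact ⟨σ, by rw [prod_rpow_card]; exact hle⟩
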